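/- arXiv:2509.02495 — 4 statements merged into one kernel-verified Lean document; each statement's English description precedes it below -/
import Mathlib

section
/- For all t, q ∈ [1/2, 1) with t < q, there exist a finite nonempty set Ω and a selection function σ on Ω such that σ is t-representable but not q-representable. -/
open Finset

variable {Ω : Type*}

/-- The measure of a finite set of states given weights `w`: `μ(A) = ∑_{ω ∈ A} w ω`. -/
noncomputable def mea (w : Ω → ℝ) (A : Finset Ω) : ℝ := ∑ ω ∈ A, w ω

/-- `w` is a probability weight function: nonnegative and summing to 1. -/
def IsProbWeight [Fintype Ω] (w : Ω → ℝ) : Prop :=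
  (∀ ω, 0 ≤ w ω) ∧ (∑ ω, w ω) = 1

/-- The measure is regular: only the empty set has measure 0. -/
def RegularW (w : Ω → ℝ) : Prop := ∀ X : Finset Ω, mea w X = 0 → X = ∅

/-- Conditional measure `μ_A(X) = μ(A ∩ X) / μ(A)`. -/
noncomputable def condMea [DecidableEq Ω] (w : Ω → ℝ) (A X : Finset Ω) : ℝ := mea w (A ∩ X) / mea w A

/-- `X` is `(m,t)`-stable for a set function `m`: `X` is nonempty and for every `E` with
`X ∩ E ≠ ∅` and `m E > 0`, `m (X ∩ E) / m E > t`. -/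
def StableFor [DecidableEq Ω] (m : Finset Ω → ℝ) (t : ℝ) (X : Finset Ω) : Prop :=
  X.Nonempty ∧ ∀ E : Finset Ω, (X ∩ E).Nonempty → 0 < m E → t < m (X ∩ E) / m E

/-- `S` is the `⊆`-least `(m,t)`-stable set. -/
def IsLeastStable [DecidableEq Ω] (m : Finset Ω → ℝ) (t : ℝ) (S : Finset Ω) : Prop :=
  StableFor m t S ∧ ∀ X : Finset Ω, StableFor m t X → S ⊆ X

/-- `w` represents the selection function `σ` for threshold `t`. -/
def RepresentsAt [DecidableEq Ω] (w : Ω → ℝ) (t : ℝ) (σ : Finset Ω → Finset Ω) : Prop :=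
  ∀ E : Finset Ω, (0 < mea w E → IsLeastStable (condMea w E) t (σ E)) ∧
    (mea w E = 0 → σ E = ∅)

/-- Selection axiom (S1): `σ(X) = ∅` only if `X = ∅`. -/
def SelA1 (σ : Finset Ω → Finset Ω) : Prop := ∀ X : Finset Ω, σ X = ∅ → X = ∅

/-- Selection axiom (S2): `σ(X) ⊆ X`. -/
def SelA2 (σ : Finset Ω → Finset Ω) : Prop := ∀ X : Finset Ω, σ X ⊆ X

/-- Selection axiom (S3): if `σ(A) ∩ B ≠ ∅` then `σ(A ∩ B) ⊆ σ(A) ∩ B`. -/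
def SelA3 [DecidableEq Ω] (σ : Finset Ω → Finset Ω) : Prop :=
  ∀ A B : Finset Ω, (σ A ∩ B).Nonempty → σ (A ∩ B) ⊆ σ A ∩ B

/-- Selection axiom (S4ₙ) for every `n`: if `σ(A ∪ Xᵢ) = Xᵢ` for all `i`, then
`σ(A ∪ ⋃ᵢ Xᵢ) ⊆ ⋃ᵢ Xᵢ`. -/
def SelA4 [DecidableEq Ω] (σ : Finset Ω → Finset Ω) : Prop :=
  ∀ n : ℕ, ∀ A : Finset Ω, ∀ X : Fin (n + 1) → Finset Ω,
    (∀ i, σ (A ∪ X i) = X i) →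
    σ (A ∪ univ.biUnion X) ⊆ univ.biUnion X

/-- `ω ≻_σ X` iff `ω ∉ X` and `σ (X ∪ {ω}) = {ω}`. -/
def succS [DecidableEq Ω] (σ : Finset Ω → Finset Ω) (ω : Ω) (X : Finset Ω) : Prop :=
  ω ∉ X ∧ σ (X ∪ {ω}) = {ω}

/-- `X ⪰_σ ω` iff `ω ∈ X` or `σ (X ∪ {ω}) ≠ {ω}`. -/
def succeqS [DecidableEq Ω] (σ : Finset Ω → Finset Ω) (X : Finset Ω) (ω : Ω) : Prop :=
  ω ∈ X ∨ σ (X ∪ {ω}) ≠ {ω}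

/-- `A ⪰*_σ B` iff either `A` is a singleton `{a}` with `a ≻_σ B`, or `B` is a singleton
`{b}` with `A ⪰_σ b`. -/
def geStar [DecidableEq Ω] (σ : Finset Ω → Finset Ω) (A B : Finset Ω) : Prop :=
  (∃ a, A = {a} ∧ succS σ a B) ∨ (∃ b, B = {b} ∧ succeqS σ A b)

/-- Two sequences of sets are balanced: every state occurs in exactly as many `A i`'s
as `B i`'s. -/
def BalancedSeq {n : ℕ} (A B : Fin n → Finset Ω) : Prop :=
  ∀ ω : Ω, Nat.card {i // ω ∈ A i} = Nat.card {i // ω ∈ B i}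

/-- `(A_i) ≤₀ (B_i)`: every state occurs in at most as many `A i`'s as `B i`'s. -/
def DomSeq {n : ℕ} (A B : Fin n → Finset Ω) : Prop :=
  ∀ ω : Ω, Nat.card {i // ω ∈ A i} ≤ Nat.card {i // ω ∈ B i}

/-- The (Scott) axiom for the induced order `⪰*_σ`. -/
def ScottAx [DecidableEq Ω] (σ : Finset Ω → Finset Ω) : Prop :=
  ∀ n : ℕ, ∀ A B : Fin (n + 1) → Finset Ω, BalancedSeq A B →
    (∀ i, geStar σ (A i) (B i)) → ∀ i, geStar σ (B i) (A i)

lemma mea_pos' {w : Ω → ℝ} (hw : ∀ x, 0 < w x) {E : Finset Ω} (hE : E.Nonempty) :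
    0 < mea w E := Finset.sum_pos (fun i _ => hw i) hE

lemma mea_mono' {w : Ω → ℝ} (hw : ∀ x, 0 < w x) {E F : Finset Ω} (h : E ⊆ F) :
    mea w E ≤ mea w F := Finset.sum_le_sum_of_subset_of_nonneg h (fun i _ _ => (hw i).le)

lemma stable_single [DecidableEq Ω] {w : Ω → ℝ} (hw : ∀ x, 0 < w x) {t : ℝ} (ht : 0 ≤ t)
    {E : Finset Ω} {x : Ω} (hx : x ∈ E) :
    StableFor (condMea w E) t {x} ↔ t * mea w E < w x := by
  have hEp : 0 < mea w E := mea_pos' hw ⟨x, hx⟩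
  have hs : mea w {x} = w x := by simp [mea]
  constructor
  · rintro ⟨_, h⟩
    have h1 : condMea w E E = 1 := by simp [condMea, hEp.ne']
    have h2 := h E (by simp [hx]) (by rw [h1]; norm_num)
    rw [h1, singleton_inter_of_mem hx, condMea, inter_singleton_of_mem hx, hs, div_one,
      lt_div_iff₀ hEp] at h2
    exact h2
  · intro h
    refine ⟨singleton_nonempty x, fun F hF hpos => ?_⟩
    have hxF : x ∈ F := by
      by_contra hc
      simp [hc] at hF
    rw [lt_div_iff₀ hpos, singleton_inter_of_mem hxF]
    unfold condMea
    rw [inter_singleton_of_mem hx, hs, ← mul_div_assoc, div_lt_div_iff_of_pos_right hEp]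
    have := mea_mono' hw (inter_subset_left : E ∩ F ⊆ E)
    nlinarith

lemma stable_inter [DecidableEq Ω] {w : Ω → ℝ} (hw : ∀ x, 0 < w x) {t : ℝ} (ht : 0 ≤ t)
    {E X : Finset Ω} (hE : E.Nonempty) (hX : StableFor (condMea w E) t X) :
    StableFor (condMea w E) t (X ∩ E) := by
  have key : ∀ F, condMea w E (X ∩ E ∩ F) = condMea w E (X ∩ F) := by
    intro F
    unfold condMea
    congr 2
    ext z; simp; tauto
  constructor
  · by_contra hc
    rw [not_nonempty_iff_eq_empty] at hc
    obtain ⟨x, hx⟩ := hX.1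
    have h := hX.2 (insert x E) ⟨x, by simp [hx]⟩ (by
      unfold condMea
      exact div_pos (mea_pos' hw (by rw [inter_eq_left.2 (subset_insert x E)]; exact hE))
        (mea_pos' hw hE))
    have h0 : condMea w E (X ∩ insert x E) = 0 := by
      have : E ∩ (X ∩ insert x E) = ∅ := by
        rw [← inter_assoc, inter_comm E X, hc, empty_inter]
      simp [condMea, this, mea]
    rw [h0, zero_div] at h
    linarith
  · intro F hF hp
    rw [key]
    exact hX.2 F (hF.mono (by intro z; simp; tauto)) hp

lemma stable_self [DecidableEq Ω] {w : Ω → ℝ} {t : ℝ} (ht : t < 1)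
    {E : Finset Ω} (hE : E.Nonempty) :
    StableFor (condMea w E) t E := by
  refine ⟨hE, fun F _ hp => ?_⟩
  have : condMea w E (E ∩ F) = condMea w E F := by
    unfold condMea
    rw [← inter_assoc, inter_self]
  rw [this, div_self hp.ne']
  exact ht

lemma stable_nested [DecidableEq Ω] {w : Ω → ℝ} (hw : ∀ x, 0 < w x) {t : ℝ} (ht : 1 / 2 ≤ t)
    {E X Y : Finset Ω} (hE : E.Nonempty) (hX : StableFor (condMea w E) t X)
    (hY : StableFor (condMea w E) t Y) (hXE : X ⊆ E) (hYE : Y ⊆ E) : X ⊆ Y ∨ Y ⊆ X := by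
  by_contra hc
  push Not at hc
  obtain ⟨h1, h2⟩ := hc
  obtain ⟨x, hx, hxY⟩ := not_subset.1 h1
  obtain ⟨y, hy, hyX⟩ := not_subset.1 h2
  have hxy : x ≠ y := fun h => hyX (h ▸ hx)
  have hEp := mea_pos' hw hE
  have m1 : ∀ z ∈ E, condMea w E {z} = w z / mea w E := by
    intro z hz
    simp [condMea, inter_singleton_of_mem hz, mea]
  have m2 : condMea w E {x, y} = (w x + w y) / mea w E := by
    have : E ∩ {x, y} = {x, y} := inter_eq_right.2 (by
      intro z; simp; rintro (rfl | rfl); exacts [hXE hx, hYE hy])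
    rw [condMea, this, mea, sum_pair hxy]
  have hpos : 0 < condMea w E {x, y} := by
    rw [m2]; exact div_pos (add_pos (hw x) (hw y)) hEp
  have e1 : X ∩ {x, y} = {x} := by
    ext z; simp; constructor
    · rintro ⟨a, rfl | rfl⟩
      · rfl
      · exact absurd a hyX
    · rintro rfl; exact ⟨hx, Or.inl rfl⟩
  have e2 : Y ∩ {x, y} = {y} := by
    ext z; simp; constructor
    · rintro ⟨a, rfl | rfl⟩
      · exact absurd a hxY
      · rfl
    · rintro rfl; exact ⟨hy, Or.inr rfl⟩
  have a1 := hX.2 {x, y} (by rw [e1]; simp) hpos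
  have a2 := hY.2 {x, y} (by rw [e2]; simp) hpos
  rw [e1, lt_div_iff₀ hpos, m1 x (hXE hx)] at a1
  rw [e2, lt_div_iff₀ hpos, m1 y (hYE hy)] at a2
  have : condMea w E {x, y} = w x / mea w E + w y / mea w E := by rw [m2, add_div]
  nlinarith

lemma exists_least [DecidableEq Ω] {w : Ω → ℝ} (hw : ∀ x, 0 < w x) {t : ℝ} (ht : 1 / 2 ≤ t)
    (ht1 : t < 1) {E : Finset Ω} (hE : E.Nonempty) :
    ∃ S, IsLeastStable (condMea w E) t S := by
  classical
  let C := E.powerset.filter (fun S => StableFor (condMea w E) t S)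
  have hC : C.Nonempty := ⟨E, by simp [C, stable_self ht1 hE]⟩
  obtain ⟨S, hS, hmin⟩ := exists_min_image C card hC
  simp only [C, mem_filter, mem_powerset] at hS hmin
  refine ⟨S, hS.2, fun X hX => ?_⟩
  have hX' := stable_inter hw (by linarith) hE hX
  rcases stable_nested hw ht hE hS.2 hX' hS.1 inter_subset_right with h | h
  · exact h.trans inter_subset_left
  · rw [← eq_of_subset_of_card_le h (hmin _ ⟨inter_subset_right, hX'⟩)]
    exact inter_subset_left

lemma least_eq_single [DecidableEq Ω] {w : Ω → ℝ} (hw : ∀ x, 0 < w x) {t : ℝ} (ht : 0 ≤ t)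
    {σ : Finset Ω → Finset Ω} (hσ : RepresentsAt w t σ)
    {E : Finset Ω} {x : Ω} (hx : x ∈ E) :
    σ E = {x} ↔ t * mea w E < w x := by
  have h := (hσ E).1 (mea_pos' hw ⟨x, hx⟩)
  rw [← stable_single hw ht hx]
  constructor
  · intro e; rw [← e]; exact h.1
  · intro e
    exact (subset_singleton_iff.1 (h.2 _ e)).resolve_left h.1.1.ne_empty

lemma heavy_subset [DecidableEq Ω] (w : Ω → ℝ) : ∀ (n : ℕ) (A : Finset Ω), A.card = n →
    ∀ k ≤ n, ∃ K ⊆ A, K.card = k ∧ (k : ℝ) * mea w A ≤ n * mea w K := by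
  intro n
  induction n with
  | zero =>
    intro A hA k hk
    exact ⟨A, Subset.rfl, by omega, by simp [Nat.le_zero.1 hk]⟩
  | succ n ih =>
    intro A hA k hk
    rcases Nat.lt_or_ge n k with h | h
    · have : k = n + 1 := by omega
      subst this
      exact ⟨A, Subset.rfl, hA, le_rfl⟩
    · have hne : A.Nonempty := card_pos.1 (by omega)
      obtain ⟨j, hj, hmin⟩ := exists_min_image A w hne
      have hcard : (A.erase j).card = n := by rw [card_erase_of_mem hj]; omega
      obtain ⟨K, hK, hKc, hle⟩ := ih (A.erase j) hcard k h
      refine ⟨K, hK.trans (erase_subset _ _), hKc, ?_⟩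
      have hsum : mea w A = mea w (A.erase j) + w j := by
        unfold mea; rw [sum_erase_add _ _ hj]
      have hge : (n : ℝ) * w j ≤ mea w (A.erase j) := by
        have := card_nsmul_le_sum (A.erase j) w (w j) (fun x hx => hmin x (mem_of_mem_erase hx))
        rwa [hcard, nsmul_eq_mul] at this
      rcases Nat.eq_zero_or_pos n with h0 | h0
      · subst h0
        have : k = 0 := by omega
        subst this
        rw [card_eq_zero.1 hKc]; simp [mea]
      · have hn : (0 : ℝ) < n := by exact_mod_cast h0
        have hk0 : (0 : ℝ) ≤ k := Nat.cast_nonneg k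
        push_cast
        rw [← mul_le_mul_iff_right₀ hn, hsum]
        have q1 := mul_le_mul_of_nonneg_left hge hk0
        have q2 := mul_le_mul_of_nonneg_left hle (by positivity : (0 : ℝ) ≤ n + 1)
        nlinarith

set_option maxHeartbeats 1000000

/-- Proposition `IncreasingThresholds`: for any thresholds
`t < q` in `[1/2, 1)` there is a selection function on some finite nonempty set that is
`t`-representable but not `q`-representable. -/
theorem stmt15 (t q : ℝ) (ht0 : 1 / 2 ≤ t) (ht1 : t < 1) (hq0 : 1 / 2 ≤ q) (hq1 : q < 1)
    (htq : t < q) :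
    ∃ (m : ℕ) (σ : Finset (Fin (m + 1)) → Finset (Fin (m + 1))),
      (∃ w : Fin (m + 1) → ℝ, IsProbWeight w ∧ RepresentsAt w t σ) ∧
      ¬ ∃ w : Fin (m + 1) → ℝ, IsProbWeight w ∧ RepresentsAt w q σ := by
  have ht' : (0 : ℝ) < 1 - t := by linarith
  have hq' : (0 : ℝ) < 1 - q := by linarith
  obtain ⟨r, hr⟩ : ∃ r, r = t / (1 - t) := ⟨_, rfl⟩
  obtain ⟨s, hs⟩ : ∃ s, s = q / (1 - q) := ⟨_, rfl⟩
  have hr1 : 1 ≤ r := by rw [hr, le_div_iff₀ ht']; linarith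
  have hrs : r < s := by
    rw [hr, hs, div_lt_div_iff₀ ht' hq']; nlinarith
  have hrt : r * (1 - t) = t := by rw [hr]; field_simp
  have hsq : s * (1 - q) = q := by rw [hs]; field_simp
  obtain ⟨k, hk⟩ := exists_nat_gt (1 / (s - r))
  have hk1 : 1 < k * (s - r) := by rwa [div_lt_iff₀ (by linarith)] at hk
  have hk0 : (0 : ℝ) < k := lt_trans (by have : 0 < s - r := by linarith
                                         positivity) hk
  obtain ⟨m, hm⟩ : ∃ m, m = ⌊s * k⌋₊ := ⟨_, rfl⟩
  have hm1 : (m : ℝ) ≤ s * k := by rw [hm]; exact Nat.floor_le (by nlinarith)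
  have hm2 : r * k < m := by
    have := Nat.lt_floor_add_one (s * (k : ℝ))
    rw [← hm] at this
    nlinarith
  have hkm : k ≤ m := by
    have : (k : ℝ) ≤ m := by nlinarith
    exact_mod_cast this
  have hm0 : (0 : ℝ) < m := by nlinarith
  let b : Fin (m + 1 + 1) := ⟨m, by omega⟩
  let c : Fin (m + 1 + 1) := ⟨m + 1, by omega⟩
  let A : Finset (Fin (m + 1 + 1)) := univ.filter (fun i => i.val < m)
  have hbc : b ≠ c := by simp [b, c]
  have hbA : b ∉ A := by simp [A, b]
  have hcA : c ∉ A := by simp [A, c]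
  have hAc : A.card = m := by
    have : A = (univ : Finset (Fin m)).map
        ⟨fun i => (⟨i.val, by omega⟩ : Fin (m + 1 + 1)), fun i j h => by
          simpa [Fin.ext_iff] using h⟩ := by
      ext i
      simp only [A, mem_filter, mem_univ, true_and, mem_map]
      constructor
      · intro h; exact ⟨⟨i, h⟩, rfl⟩
      · rintro ⟨j, rfl⟩; exact j.2
    rw [this, card_map]; simp
  let v : Fin (m + 1 + 1) → ℝ := fun i =>
    if i.val < m then 1 else if i.val = m then (r * k + m) / 2 else r * m
  have hvA : ∀ i ∈ A, v i = 1 := by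
    intro i hi
    simp only [A, mem_filter, mem_univ, true_and] at hi
    simp [v, hi]
  have hvb : v b = (r * k + m) / 2 := by simp [v, b]
  have hvc : v c = r * m := by simp [v, c]
  have hv : ∀ i, 0 < v i := by
    intro i
    simp only [v]
    split_ifs <;> positivity
  obtain ⟨T, hT⟩ : ∃ T, T = ∑ i, v i := ⟨_, rfl⟩
  have hTp : 0 < T := by rw [hT]; exact sum_pos (fun i _ => hv i) ⟨b, mem_univ b⟩
  let w : Fin (m + 1 + 1) → ℝ := fun i => v i / T
  have hw : ∀ i, 0 < w i := fun i => div_pos (hv i) hTp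
  have hwm : ∀ E, mea w E = mea v E / T := by
    intro E; simp only [mea, w, sum_div]
  have hex : ∀ E : Finset (Fin (m + 1 + 1)), ∃ S,
      (0 < mea w E → IsLeastStable (condMea w E) t S) ∧ (mea w E = 0 → S = ∅) := by
    intro E
    rcases E.eq_empty_or_nonempty with h | h
    · exact ⟨∅, by simp [h, mea], fun _ => rfl⟩
    · obtain ⟨S, hS⟩ := exists_least hw ht0 ht1 h
      exact ⟨S, fun _ => hS, fun h0 => absurd h0 (mea_pos' hw h).ne'⟩
  choose σ hσ using hex
  have hrep : RepresentsAt w t σ := hσ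
  have heq : ∀ {E x}, x ∈ E → (σ E = {x} ↔ t * mea v E < v x) := by
    intro E x hx
    rw [least_eq_single hw (by linarith) hrep hx, hwm, ← mul_div_assoc]
    exact div_lt_div_iff_of_pos_right hTp
  have hsing : ∀ x, σ {x} = {x} := by
    intro x
    rw [heq (mem_singleton_self x)]
    simp only [mea, sum_singleton]
    nlinarith [hv x]
  have hB : ∀ K ⊆ A, K.card = k → σ (insert b K) = {b} := by
    intro K hK hc
    rw [heq (mem_insert_self b K), mea, sum_insert (fun h => hbA (hK h)),
      sum_congr rfl (fun i hi => hvA i (hK hi)), hvb]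
    simp only [sum_const, hc, nsmul_eq_mul, mul_one]
    nlinarith
  have hC : σ {c, b} = {c} := by
    rw [heq (mem_insert_self c _), mea, sum_pair hbc.symm, hvb, hvc]
    have : r * ((r * k + m) / 2) < r * m := by nlinarith
    nlinarith
  have hD : σ (insert c A) ≠ {c} := by
    rw [Ne, heq (mem_insert_self c A), mea, sum_insert hcA, sum_congr rfl hvA, hvc]
    simp only [sum_const, hAc, nsmul_eq_mul, mul_one, not_lt]
    nlinarith
  refine ⟨m + 1, σ, ⟨w, ⟨fun i => (hw i).le, ?_⟩, hrep⟩, ?_⟩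
  · simp only [w, ← sum_div]
    rw [← hT, div_self hTp.ne']
  · rintro ⟨u, ⟨hu0, -⟩, hu⟩
    have hup : ∀ i, 0 < u i := by
      intro i
      refine lt_of_le_of_ne (hu0 i) fun h => ?_
      have := (hu {i}).2 (by simp [mea, ← h])
      rw [hsing] at this
      exact singleton_ne_empty i this
    have hq00 : 0 ≤ q := by linarith
    obtain ⟨K, hKA, hKc, hKle⟩ := heavy_subset u m A hAc k hkm
    have f1 := (least_eq_single hup hq00 hu (mem_insert_self b K)).1 (hB K hKA hKc)
    have f2 := (least_eq_single hup hq00 hu (mem_insert_self c _)).1 hC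
    have f3 := fun h => hD ((least_eq_single hup hq00 hu (mem_insert_self c A)).2 h)
    rw [mea, sum_insert (fun h => hbA (hKA h))] at f1
    rw [mea, sum_pair hbc.symm] at f2
    rw [imp_false, mea, sum_insert hcA, not_lt] at f3
    change (k : ℝ) * ∑ i ∈ A, u i ≤ m * ∑ i ∈ K, u i at hKle
    have hAp : 0 ≤ ∑ i ∈ A, u i := sum_nonneg fun i _ => hu0 i
    generalize (∑ i ∈ A, u i) = a at *
    generalize (∑ i ∈ K, u i) = κ at *
    have hqp : 0 < q := by linarith
    have g1 : u b < a := by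
      have : q * u b < q * a := by linarith
      exact lt_of_mul_lt_mul_left this hq00
    have g2 : q * κ < (1 - q) * u b := by linarith
    have g3 : s * κ < u b := by
      have g2' := g2
      rw [show q * κ = s * (1 - q) * κ by rw [hsq]] at g2'
      have : (1 - q) * (s * κ) < (1 - q) * u b := by
        have e : (1 - q) * (s * κ) = s * (1 - q) * κ := by ring
        rw [e]; exact g2'
      exact lt_of_mul_lt_mul_left this hq'.le
    have g4 : s * (k * a) ≤ s * (m * κ) := mul_le_mul_of_nonneg_left hKle (by linarith)
    have g5 : m * a ≤ s * k * a := mul_le_mul_of_nonneg_right hm1 hAp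
    have g6 : m * (s * κ) < m * u b := mul_lt_mul_of_pos_left g3 hm0
    have g7 : m * u b < m * a := mul_lt_mul_of_pos_left g1 hm0
    linarith
end

section
/- For all real numbers a, b with 1 ≤ a < b, there exist natural numbers m ≥ 2 and n > 1 such that a < n^(1/(m−1)) < b. Equivalently, the set of positive real solutions of the equations x^m − n·x = 0 with m, n ranging over the natural numbers is dense in the interval [1, ∞). -/
/-- density lemma: for all reals `1 ≤ a < b` there are naturals `m ≥ 2`
and `n > 1` with `a < n ^ (1 / (m - 1)) < b`; i.e., the positive solutions of the equations
`x ^ m - n * x = 0` are dense in `[1, ∞)`. -/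
theorem stmt16 : ∀ a b : ℝ, 1 ≤ a → a < b →
    ∃ m n : ℕ, 2 ≤ m ∧ 1 < n ∧
      a < (n : ℝ) ^ ((1 : ℝ) / ((m : ℝ) - 1)) ∧
      (n : ℝ) ^ ((1 : ℝ) / ((m : ℝ) - 1)) < b := by
  intro a b ha hab
  have ha0 : 0 < a := by linarith
  have hb0 : 0 < b := by linarith
  obtain ⟨k, hk⟩ := pow_unbounded_of_one_lt (2 : ℝ) ((one_lt_div ha0).2 hab)
  have hk0 : k ≠ 0 := by
    rintro rfl
    norm_num at hk
  have hak : 1 ≤ a ^ k := one_le_pow₀ ha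
  have hbk : 2 * a ^ k < b ^ k := by
    rw [div_pow, lt_div_iff₀ (by positivity)] at hk
    exact hk
  have h1 : a ^ k < ((⌊a ^ k⌋₊ + 1 : ℕ) : ℝ) := by
    push_cast
    exact Nat.lt_floor_add_one _
  have h2 : ((⌊a ^ k⌋₊ + 1 : ℕ) : ℝ) < b ^ k := by
    push_cast
    have := Nat.floor_le (show 0 ≤ a ^ k by positivity)
    linarith
  generalize ⌊a ^ k⌋₊ + 1 = n at h1 h2
  have hkr : (0 : ℝ) < 1 / (k : ℝ) := by positivity
  refine ⟨k + 1, n, by omega, ?_, ?_, ?_⟩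
  · have : (1 : ℝ) < n := by linarith
    exact_mod_cast this
  · have h := Real.rpow_lt_rpow (by positivity) h1 hkr
    rw [one_div, Real.pow_rpow_inv_natCast ha0.le hk0] at h
    simpa using h
  · have h := Real.rpow_lt_rpow (by positivity) h2 hkr
    rw [one_div, Real.pow_rpow_inv_natCast hb0.le hk0] at h
    simpa using h
end

section
/- Let Ω be a finite nonempty set, σ a selection function on Ω, t ∈ [1/2, 1), and μ a probability measure on Ω that represents σ for threshold t. Then there exists a rational number t' ∈ [1/2, 1) such that μ represents σ for threshold t'. In particular, every representable selection function on a finite set is t-representable for some rational threshold t. -/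
open Finset

variable {Ω : Type*}

/-- Proposition `QREP`: if `μ` represents `σ` for some threshold
`t ∈ [1/2, 1)`, then `μ` represents `σ` for some rational threshold `t' ∈ [1/2, 1)`;
hence every representable selection function is representable at a rational threshold. -/
theorem stmt17 [Fintype Ω] [DecidableEq Ω] [Nonempty Ω]
    (σ : Finset Ω → Finset Ω)
    (t : ℝ) (ht0 : 1 / 2 ≤ t) (ht1 : t < 1)
    (w : Ω → ℝ) (hw : IsProbWeight w)
    (hrep : RepresentsAt w t σ) :
    ∃ t' : ℚ, 1 / 2 ≤ (t' : ℝ) ∧ (t' : ℝ) < 1 ∧ RepresentsAt w (t' : ℝ) σ := by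
  classical
  let r : Finset Ω × Finset Ω × Finset Ω → ℝ := fun p =>
    condMea w p.1 (p.2.1 ∩ p.2.2) / condMea w p.1 p.2.2
  let R : Finset ℝ := insert 1 ((univ.image r).filter (fun x => t < x))
  have hR : R.Nonempty := ⟨1, by simp [R]⟩
  have hlt : t < R.min' hR := by
    rw [Finset.lt_min'_iff]
    intro y hy
    rcases Finset.mem_insert.1 hy with h | h
    · rw [h]; exact ht1
    · exact (Finset.mem_filter.1 h).2
  obtain ⟨q, hq1, hq2⟩ := exists_rat_btwn hlt
  have hone : (q : ℝ) < 1 := lt_of_lt_of_le hq2 (Finset.min'_le _ _ (by simp [R]))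
  have key : ∀ A X E : Finset Ω, t < condMea w A (X ∩ E) / condMea w A E ↔
      (q : ℝ) < condMea w A (X ∩ E) / condMea w A E := by
    intro A X E
    refine ⟨fun h => lt_of_lt_of_le hq2 (Finset.min'_le _ _ ?_), fun h => hq1.trans h⟩
    exact Finset.mem_insert_of_mem
      (Finset.mem_filter.2 ⟨Finset.mem_image.2 ⟨(A, X, E), Finset.mem_univ _, rfl⟩, h⟩)
  have hst : ∀ A X : Finset Ω, StableFor (condMea w A) t X ↔ StableFor (condMea w A) (q : ℝ) X := by
    intro A X
    simp only [StableFor, key]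
  refine ⟨q, ht0.trans hq1.le, hone, ?_⟩
  intro E
  refine ⟨fun h => ?_, (hrep E).2⟩
  obtain ⟨h1, h2⟩ := (hrep E).1 h
  exact ⟨(hst _ _).1 h1, fun X hX => h2 X ((hst _ _).2 hX)⟩
end

section
/- Let Ω be a finite nonempty set, t ∈ [1/2, 1), μ a probability measure on Ω, and σ a selection function on Ω that μ represents for threshold t. Then σ satisfies: (β) for all X ⊆ Y ⊆ Ω and x, y ∈ σ(X), if x ∈ σ(Y) then y ∈ σ(Y); (WIIA) for all X ⊆ Y ⊆ Ω, if σ(Y)∩X ≠ ∅ then σ(X) ⊆ σ(Y); and (Aizerman) for all Y ⊆ X ⊆ Ω, if σ(X) ⊆ Y then σ(Y) ⊆ σ(X). -/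
open Finset

variable {Ω : Type*}

theorem aux_stable_iff [DecidableEq Ω] (w : Ω → ℝ) (t : ℝ) (X S : Finset Ω) (hX : 0 < mea w X) :
    StableFor (condMea w X) t S ↔ S.Nonempty ∧ ∀ E : Finset Ω, (S ∩ E).Nonempty →
      0 < mea w (X ∩ E) → t * mea w (X ∩ E) < mea w (X ∩ (S ∩ E)) := by
  unfold StableFor condMea
  refine and_congr_right fun _ => forall_congr' fun E => imp_congr_right fun _ => ?_
  rw [div_pos_iff_of_pos_right hX]
  refine imp_congr_right fun h => ?_
  rw [div_div_div_cancel_right₀ hX.ne', lt_div_iff₀ h]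

theorem aux_pos [Fintype Ω] [DecidableEq Ω] (t : ℝ) (ht1 : t < 1)
    (w : Ω → ℝ) (hw : IsProbWeight w)
    (σ : Finset Ω → Finset Ω) (hrep : RepresentsAt w t σ) (X : Finset Ω) (x : Ω)
    (hx : x ∈ σ X) : 0 < mea w X ∧ x ∈ X ∧ 0 < w x := by
  have h0 : 0 ≤ mea w X := Finset.sum_nonneg fun i _ => hw.1 i
  have hX : 0 < mea w X := by
    rcases h0.lt_or_eq with h | h
    · exact h
    · rw [(hrep X).2 h.symm] at hx
      simp at hx
  refine ⟨hX, ?_⟩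
  have hmea : ∀ A : Finset Ω, mea w (A.filter fun i => 0 < w i) = mea w A := by
    intro A
    unfold mea
    refine Finset.sum_subset (Finset.filter_subset _ _) fun i hi hn => ?_
    rw [Finset.mem_filter, not_and, not_lt] at hn
    exact le_antisymm (hn hi) (hw.1 i)
  have hst : StableFor (condMea w X) t (X.filter fun i => 0 < w i) := by
    rw [aux_stable_iff w t X _ hX]
    constructor
    · rw [Finset.nonempty_iff_ne_empty]
      intro he
      have := hmea X
      rw [he] at this
      simp [mea] at this
      simp [mea, ← this] at hX
    · intro E _ hE
      have : X ∩ ((X.filter fun i => 0 < w i) ∩ E) = (X ∩ E).filter fun i => 0 < w i := by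
        ext i
        simp only [Finset.mem_inter, Finset.mem_filter]
        tauto
      rw [this, hmea]
      nlinarith
  exact Finset.mem_filter.1 (((hrep X).1 hX).2 _ hst hx)

theorem aux_wiia [Fintype Ω] [DecidableEq Ω] (t : ℝ) (ht1 : t < 1)
    (w : Ω → ℝ) (hw : IsProbWeight w)
    (σ : Finset Ω → Finset Ω) (hrep : RepresentsAt w t σ) (X Y : Finset Ω) (hXY : X ⊆ Y)
    (hne : (σ Y ∩ X).Nonempty) : σ X ⊆ σ Y := by
  obtain ⟨x, hx⟩ := hne
  have hx' := Finset.mem_inter.1 hx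
  obtain ⟨hY, -, hwx⟩ := aux_pos t ht1 w hw σ hrep Y x hx'.1
  have hX : 0 < mea w X := Finset.sum_pos' (fun i _ => hw.1 i) ⟨x, hx'.2, hwx⟩
  have hsY := (aux_stable_iff w t Y _ hY).1 ((hrep Y).1 hY).1
  have hst : StableFor (condMea w X) t (σ Y ∩ X) := by
    rw [aux_stable_iff w t X _ hX]
    refine ⟨⟨x, hx⟩, fun E hE hm => ?_⟩
    have e1 : Y ∩ (X ∩ E) = X ∩ E := by
      rw [← Finset.inter_assoc, Finset.inter_eq_right.2 hXY]
    have e2 : X ∩ (σ Y ∩ X ∩ E) = Y ∩ (σ Y ∩ (X ∩ E)) := by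
      ext i
      have := @hXY i
      simp only [Finset.mem_inter]
      tauto
    have := hsY.2 (X ∩ E) (by rwa [← Finset.inter_assoc]) (by rwa [e1])
    rw [e1] at this
    rwa [e2]
  exact (((hrep X).1 hX).2 _ hst).trans Finset.inter_subset_left

/-- Observation `PROPalphabetaAizerman` and Proposition on (WIIA):
every representable selection function satisfies (β), (WIIA) and the Aizerman axiom. -/
theorem stmt18 [Fintype Ω] [DecidableEq Ω] [Nonempty Ω]
    (t : ℝ) (ht0 : 1 / 2 ≤ t) (ht1 : t < 1)
    (w : Ω → ℝ) (hw : IsProbWeight w)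
    (σ : Finset Ω → Finset Ω) (hrep : RepresentsAt w t σ) :
    (∀ X Y : Finset Ω, X ⊆ Y → ∀ x ∈ σ X, ∀ y ∈ σ X, x ∈ σ Y → y ∈ σ Y) ∧
    (∀ X Y : Finset Ω, X ⊆ Y → (σ Y ∩ X).Nonempty → σ X ⊆ σ Y) ∧
    (∀ X Y : Finset Ω, Y ⊆ X → σ X ⊆ Y → σ Y ⊆ σ X) := by
  refine ⟨fun X Y hXY x hx y hy hxY => ?_, fun X Y hXY h => ?_, fun X Y hYX h => ?_⟩
  · exact aux_wiia t ht1 w hw σ hrep X Y hXY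
      ⟨x, Finset.mem_inter.2 ⟨hxY, (aux_pos t ht1 w hw σ hrep X x hx).2.1⟩⟩ hy
  · exact aux_wiia t ht1 w hw σ hrep X Y hXY h
  · intro y hy
    have hY := (aux_pos t ht1 w hw σ hrep Y y hy).1
    have hX : 0 < mea w X :=
      hY.trans_le (Finset.sum_le_sum_of_subset_of_nonneg hYX fun i _ _ => hw.1 i)
    obtain ⟨x, hx⟩ := ((hrep X).1 hX).1.1
    exact aux_wiia t ht1 w hw σ hrep Y X hYX ⟨x, Finset.mem_inter.2 ⟨hx, h hx⟩⟩ hy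
end
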